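/- Let A and B be C*-algebras such that at least one of A and B is finite-dimensional. Then A ⊗̂ B is a symmetric operator algebra; in particular, A ⊗̂ B is *-isomorphic to the minimal (spatial) C*-tensor product A ⊗_min B. -/

import Mathlib

open scoped TensorProduct
open Pointwise

universe u

noncomputable section

/-- A C⋆-norm on a complex `*`-algebra.  On a matrix algebra over a C⋆-algebra such a
norm is unique, namely the canonical C⋆-norm. -/
structure IsCStarNorm {M : Type*} [NonUnitalRing M] [StarRing M] [Module ℂ M]
    (N : M → ℝ) : Prop where
  add_le : ∀ x y, N (x + y) ≤ N x + N y
  smul_eq : ∀ (c : ℂ) (x : M), N (c • x) = ‖c‖ * N x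
  eq_zero_of : ∀ x, N x = 0 → x = 0
  mul_le : ∀ x y, N (x * y) ≤ N x * N y
  star_mul_self : ∀ x, N (star x * x) = N x * N x

/-- The operator space projective tensor norm `‖·‖_∧` on the algebraic tensor product
`A ⊗ B`, relative to given families of matrix norms on `A` and `B`:
`‖u‖_∧ = inf { ‖α‖ ‖v‖ ‖w‖ ‖β‖ : u = α (v ⊗ w) β }` where `v ∈ M_p(A)`, `w ∈ M_q(B)`,
`α ∈ M_{1,pq}(ℂ)` and `β ∈ M_{pq,1}(ℂ)` (row and column vectors carrying the Euclidean
norm, which is their norm as scalar matrices). -/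
noncomputable def osProjNorm {A B : Type u}
    [AddCommGroup A] [Module ℂ A] [AddCommGroup B] [Module ℂ B]
    (NA : ∀ p : ℕ, Matrix (Fin p) (Fin p) A → ℝ)
    (NB : ∀ q : ℕ, Matrix (Fin q) (Fin q) B → ℝ) (u : A ⊗[ℂ] B) : ℝ :=
  sInf { r : ℝ | ∃ (p q : ℕ) (α : Fin p × Fin q → ℂ) (v : Matrix (Fin p) (Fin p) A)
      (w : Matrix (Fin q) (Fin q) B) (β : Fin p × Fin q → ℂ),
      u = ∑ ik : Fin p × Fin q, ∑ jl : Fin p × Fin q,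
            (α ik * β jl) • (v ik.1 jl.1 ⊗ₜ[ℂ] w ik.2 jl.2) ∧
      r = Real.sqrt (∑ ik, ‖α ik‖ ^ 2) * NA p v * NB q w *
            Real.sqrt (∑ jl, ‖β jl‖ ^ 2) }

/-- `X` is a completion of the algebraic tensor product `A ⊗ B` with respect to the
norm `ν`, via the (necessarily isometric) dense embedding `ι`, and the multiplication and
involution of `X` are the canonical ones induced from `A` and `B`.  Applied with
`ν = osProjNorm NA NB` (for the canonical matrix C⋆-norms `NA`, `NB`) this characterizes
the Banach `*`-algebra `A ⊗̂ B` (the operator space projective tensor product) up to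
isometric `*`-isomorphism; applied with `ν = bsProjNorm` it characterizes the Banach
space projective tensor product `A ⊗_γ B`. -/
structure IsTensorCompletion {A B : Type u} [NonUnitalRing A] [StarRing A] [Module ℂ A]
    [NonUnitalRing B] [StarRing B] [Module ℂ B] (ν : A ⊗[ℂ] B → ℝ)
    (X : Type u) [NonUnitalNormedRing X] [StarRing X] [NormedSpace ℂ X] [CompleteSpace X]
    (ι : A ⊗[ℂ] B →ₗ[ℂ] X) : Prop where
  norm_eq : ∀ u, ‖ι u‖ = ν u
  dense : DenseRange ι
  mul_tmul : ∀ (a c : A) (b d : B),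
    ι (a ⊗ₜ[ℂ] b) * ι (c ⊗ₜ[ℂ] d) = ι ((a * c) ⊗ₜ[ℂ] (b * d))
  star_tmul : ∀ (a : A) (b : B), star (ι (a ⊗ₜ[ℂ] b)) = ι (star a ⊗ₜ[ℂ] star b)

/-- The product ideal `S ⊗̂ T`: the closure in `X` (a completion of `A ⊗ B`) of the span of
elementary tensors `a ⊗ b` with `a ∈ S`, `b ∈ T`. -/
def tensorIdeal {A B : Type u} [NonUnitalRing A] [StarRing A] [Module ℂ A]
    [NonUnitalRing B] [StarRing B] [Module ℂ B]
    {X : Type u} [NonUnitalNormedRing X] [StarRing X] [NormedSpace ℂ X] [CompleteSpace X]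
    (ι : A ⊗[ℂ] B →ₗ[ℂ] X) (S : Set A) (T : Set B) : Set X :=
  closure (ι '' (Submodule.span ℂ (Set.image2 (fun a b => a ⊗ₜ[ℂ] b) S T)))

/-- A closed prime (two-sided) ideal of a Banach algebra: a proper closed two-sided ideal `K`
such that whenever the product of two closed two-sided ideals is contained in `K`, one of them
is contained in `K`. -/
def IsClosedPrimeIdeal {Y : Type u} [NonUnitalNormedRing Y] (K : TwoSidedIdeal Y) : Prop :=
  IsClosed (K : Set Y) ∧ (K : Set Y) ≠ Set.univ ∧
    ∀ I J : TwoSidedIdeal Y, IsClosed (I : Set Y) → IsClosed (J : Set Y) →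
      (∀ x ∈ I, ∀ y ∈ J, x * y ∈ K) → (I : Set Y) ⊆ (K : Set Y) ∨ (J : Set Y) ⊆ (K : Set Y)

/-- An irreducible continuous `*`-representation of a Banach `*`-algebra `Y` on a complex
Hilbert space. -/
structure IrreducibleRepOn (Y : Type u)
    [NonUnitalNormedRing Y] [StarRing Y] [NormedSpace ℂ Y] where
  H : Type u
  [normH : NormedAddCommGroup H]
  [ipsH : InnerProductSpace ℂ H]
  [csH : CompleteSpace H]
  π : Y →⋆ₙₐ[ℂ] (H →L[ℂ] H)
  continuous : Continuous π
  nonzero : ∃ y, π y ≠ 0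
  irreducible : ∀ S : Submodule ℂ H, IsClosed (S : Set H) →
    (∀ y : Y, ∀ v ∈ S, π y v ∈ S) → S = ⊥ ∨ S = ⊤

/-- A primitive ideal: the kernel of an irreducible `*`-representation. -/
def IsPrimitiveIdeal {Y : Type u} [NonUnitalNormedRing Y] [StarRing Y] [NormedSpace ℂ Y]
    (K : TwoSidedIdeal Y) : Prop :=
  ∃ ρ : IrreducibleRepOn Y, ∀ y, y ∈ K ↔ ρ.π y = 0

/-- A subset `K` of a ring is modular (as an ideal) if there is a relative unit `e`
with `x * e - x ∈ K` and `e * x - x ∈ K` for every `x`. -/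
def IsModularIdealSet {Y : Type u} [NonUnitalRing Y] (K : Set Y) : Prop :=
  ∃ e : Y, ∀ x : Y, x * e - x ∈ K ∧ e * x - x ∈ K

/-- A maximal modular (two-sided) ideal: a modular ideal which is proper and maximal among
proper two-sided ideals. -/
def IsMaximalModularIdeal {Y : Type u} [NonUnitalRing Y] (K : TwoSidedIdeal Y) : Prop :=
  IsModularIdealSet (K : Set Y) ∧ (K : Set Y) ≠ Set.univ ∧
    ∀ L : TwoSidedIdeal Y, (K : Set Y) ⊆ (L : Set Y) →
      (L : Set Y) = (K : Set Y) ∨ (L : Set Y) = Set.univ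

/-- The operator norm of a `p × p` matrix of bounded operators on a Hilbert space `H`,
viewed as an operator on the `ℓ²`-direct sum `H ⊕ ⋯ ⊕ H`. -/
noncomputable def opMatrixNorm {H : Type u} [NormedAddCommGroup H] [InnerProductSpace ℂ H]
    {p : ℕ} (T : Matrix (Fin p) (Fin p) (H →L[ℂ] H)) : ℝ :=
  sSup { r : ℝ | ∃ x : Fin p → H, (∑ i, ‖x i‖ ^ 2) ≤ 1 ∧
      r = Real.sqrt (∑ i, ‖∑ j, (T i j) (x j)‖ ^ 2) }

/-- An operator algebra structure on a Banach algebra `Y`: a bicontinuous algebra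
homomorphism of `Y` into the bounded operators on some Hilbert space. -/
structure OperatorAlgebraEmbedding (Y : Type u) [NonUnitalNormedRing Y] [NormedSpace ℂ Y] where
  H : Type u
  [normH : NormedAddCommGroup H]
  [ipsH : InnerProductSpace ℂ H]
  [csH : CompleteSpace H]
  ρ : Y →ₙₐ[ℂ] (H →L[ℂ] H)
  c : ℝ
  C : ℝ
  c_pos : 0 < c
  lower : ∀ y, c * ‖y‖ ≤ ‖ρ y‖
  upper : ∀ y, ‖ρ y‖ ≤ C * ‖y‖

/-- The matrix norms on `Y` induced by an operator algebra embedding, giving `Y` its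
operator space structure: the norm of `v ∈ M_p(Y)` is the operator norm of the matrix
of operators obtained by applying the embedding entrywise. -/
noncomputable def OperatorAlgebraEmbedding.matrixNorm {Y : Type u}
    [NonUnitalNormedRing Y] [NormedSpace ℂ Y] (e : OperatorAlgebraEmbedding Y)
    (p : ℕ) (v : Matrix (Fin p) (Fin p) Y) : ℝ :=
  letI := e.normH; letI := e.ipsH
  opMatrixNorm (v.map e.ρ)

/-- The Banach space projective tensor norm `‖·‖_γ` on the algebraic tensor product. -/
noncomputable def bsProjNorm {A B : Type u} [NonUnitalNormedRing A] [NormedSpace ℂ A]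
    [NonUnitalNormedRing B] [NormedSpace ℂ B] (u : A ⊗[ℂ] B) : ℝ :=
  sInf { r : ℝ | ∃ (n : ℕ) (a : Fin n → A) (b : Fin n → B),
      u = ∑ i, a i ⊗ₜ[ℂ] b i ∧ r = ∑ i, ‖a i‖ * ‖b i‖ }

/-- A C⋆-algebra `A` is subhomogeneous if there is `n : ℕ` bounding the (finite)
dimensions of all its irreducible `*`-representations. -/
def IsSubhomogeneous (A : Type u) [NonUnitalCStarAlgebra A] : Prop :=
  ∃ n : ℕ, ∀ ρ : IrreducibleRepOn A,
    letI := ρ.normH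
    letI := ρ.ipsH
    FiniteDimensional ℂ ρ.H ∧ Module.finrank ℂ ρ.H ≤ n



/-- A witness that `X` (a realization of `A ⊗̂ B`) is `*`-isomorphic to the minimal (spatial)
C⋆-tensor product `A ⊗_min B`: a C⋆-algebra `Y` containing the algebraic tensor product
densely and injectively whose norm is minimal among all C⋆-norms on `A ⊗ B`, together with a
`*`-isomorphism `X ≃ Y` extending the identity on the algebraic tensor product. -/
structure MinTensorWitness (A B : Type u)
    [NonUnitalCStarAlgebra A] [NonUnitalCStarAlgebra B]
    (X : Type u) [NonUnitalNormedRing X] [StarRing X] [NormedSpace ℂ X] [CompleteSpace X]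
    (ι : A ⊗[ℂ] B →ₗ[ℂ] X) where
  Y : Type u
  [algY : NonUnitalCStarAlgebra Y]
  ιY : A ⊗[ℂ] B →ₗ[ℂ] Y
  inj : Function.Injective ιY
  dense : DenseRange ιY
  mul_tmul : ∀ (a c : A) (b d : B),
    ιY (a ⊗ₜ[ℂ] b) * ιY (c ⊗ₜ[ℂ] d) = ιY ((a * c) ⊗ₜ[ℂ] (b * d))
  star_tmul : ∀ (a : A) (b : B), star (ιY (a ⊗ₜ[ℂ] b)) = ιY (star a ⊗ₜ[ℂ] star b)
  minimal : ∀ (Z : Type u) [NonUnitalCStarAlgebra Z] (ιZ : A ⊗[ℂ] B →ₗ[ℂ] Z),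
    Function.Injective ιZ → DenseRange ιZ →
    (∀ (a c : A) (b d : B), ιZ (a ⊗ₜ[ℂ] b) * ιZ (c ⊗ₜ[ℂ] d) = ιZ ((a * c) ⊗ₜ[ℂ] (b * d))) →
    (∀ (a : A) (b : B), star (ιZ (a ⊗ₜ[ℂ] b)) = ιZ (star a ⊗ₜ[ℂ] star b)) →
    ∀ u : A ⊗[ℂ] B, ‖ιY u‖ ≤ ‖ιZ u‖
  iso : X ≃⋆ₐ[ℂ] Y
  iso_comm : ∀ u : A ⊗[ℂ] B, iso (ι u) = ιY u

/-!
Let `A` be finite-dimensional; interchanging the factors preserves `‖·‖_∧`. Expanding `u : A ⊗ B`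
along a basis of `A`, a norm on `A ⊗ B` is determined up to equivalence, and is complete, as soon
as it bounds the slices `(f ⊗ id) u` and is bounded on `a ⊗ B` by a multiple of the norm of `B`.
A C⋆-norm on a C⋆-algebra being unique, the matrix norms defining `‖·‖_∧` are the canonical ones;
this gives `‖(f ⊗ id) u‖ ≤ ‖f‖ ‖u‖_∧` and `‖a ⊗ b‖_∧ ≤ ‖a‖ ‖b‖`, so `‖·‖_∧` has the property. So
does the C⋆-norm of `M_n(B)` pulled back along `π ⊗ id`, for a faithful representation
`π : A → M_n(ℂ)`. Hence `A ⊗̂ B` is the algebraic tensor product, bicontinuously `*`-isomorphic to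
a C⋆-subalgebra of `M_n(B)`. A C⋆-algebra is symmetric and, by Gelfand–Naimark, isometrically
represented on a Hilbert space; as injective `*`-homomorphisms of C⋆-algebras are isometric, the
C⋆-norm of `A ⊗ B` is unique, hence minimal.
-/

section CutOff

variable {M : Type*} [NonUnitalCStarAlgebra M]

-- Here `f` and `g` are the values at `a` of `t ↦ max (|t| - r) 0` and `t ↦ t / max |t| r ^ 2`,
-- the latter being `t⁻¹` on the support of the former.
lemma exists_mul_mul_eq_of_lt_norm {a : M} (ha : IsSelfAdjoint a) {r : ℝ} (hr : 0 < r)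
    (hra : r < ‖a‖) : ∃ f g : M, f ≠ 0 ∧ ‖g‖ ≤ r⁻¹ ∧ a * g * f = f := by
  let F : ℝ → ℝ := fun t ↦ max (|t| - r) 0
  let G : ℝ → ℝ := fun t ↦ t / max |t| r ^ 2
  have hF : ContinuousOn F (quasispectrum ℝ a) := by fun_prop
  have hG : ContinuousOn G (quasispectrum ℝ a) :=
    (continuous_id.div₀ (by fun_prop) fun t ↦ by positivity).continuousOn
  have hF₀ : F 0 = 0 := by simp [F, hr.le]
  have hG₀ : G 0 = 0 := by simp [G]
  refine ⟨cfcₙ F a, cfcₙ G a, ?_, norm_cfcₙ_le fun t _ ↦ ?_, ?_⟩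
  · obtain ⟨t, ht, hta⟩ :=
      (NonUnitalIsometricContinuousFunctionalCalculus.isGreatest_norm_quasispectrum (𝕜 := ℝ) a ha).1
    have h_apply : 0 < F t := lt_max_of_lt_left (sub_pos.2 (hra.trans_eq hta.symm))
    have h_le := norm_apply_le_norm_cfcₙ F a ht hF hF₀ ha
    exact norm_pos_iff.1 ((norm_pos_iff.2 h_apply.ne').trans_le h_le)
  · have h_max : 0 < max |t| r := lt_max_of_lt_right hr
    rw [Real.norm_eq_abs, abs_div, abs_pow, abs_of_pos h_max, sq, ← div_div, ← one_div]
    exact div_le_div₀ zero_le_one ((div_le_one h_max).2 (le_max_left _ _)) hr (le_max_right _ _)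
  · have h_id : a * cfcₙ G a * cfcₙ F a = cfcₙ (fun t ↦ t * G t * F t) a := by
      rw [cfcₙ_mul (fun t ↦ t * G t) F a (by fun_prop) (by simp) hF hF₀,
        cfcₙ_mul (fun t ↦ t) G a (by fun_prop) rfl hG hG₀, cfcₙ_id' ℝ a]
    rw [h_id]
    refine cfcₙ_congr fun t _ ↦ ?_
    obtain htr | htr := le_total |t| r
    · simp [F, htr]
    · have ht : t ≠ 0 := abs_pos.1 (hr.trans_le htr)
      simp only [G, max_eq_left htr, sq_abs]
      field_simp

end CutOff

namespace IsCStarNorm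

section Ring

variable {M : Type*} [NonUnitalRing M] [StarRing M] [Module ℂ M] {N : M → ℝ}

lemma map_zero (h : IsCStarNorm N) : N 0 = 0 := by
  simpa only [zero_smul, norm_zero, zero_mul] using h.smul_eq 0 0

lemma nonneg (h : IsCStarNorm N) (x : M) : 0 ≤ N x := by
  have h_neg : N (-x) = N x := by simpa using h.smul_eq (-1) x
  have h_add := h.add_le x (-x)
  rw [add_neg_cancel, h.map_zero, h_neg] at h_add
  linarith

lemma eq_of_star_mul_self_eq (h : IsCStarNorm N) {x y : M} (hxy : star x * x = star y * y) :
    N x = N y := by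
  rw [← mul_self_inj (h.nonneg x) (h.nonneg y), ← h.star_mul_self, ← h.star_mul_self, hxy]

end Ring

variable {M : Type*} [NonUnitalCStarAlgebra M] {N : M → ℝ}

lemma eq_of_inr_eq_unitary_mul (h : IsCStarNorm N) {x y : M} {u : Unitization ℂ M}
    (hu : u ∈ unitary (Unitization ℂ M)) (hy : (y : Unitization ℂ M) = u * x) : N y = N x := by
  refine h.eq_of_star_mul_self_eq (Unitization.inr_injective (R := ℂ) ?_)
  rw [Unitization.inr_mul, Unitization.inr_mul, Unitization.inr_star, Unitization.inr_star, hy,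
    star_mul, mul_assoc, ← mul_assoc (star u), Unitary.star_mul_self_of_mem hu, one_mul]

-- A self-adjoint contraction is the mean of two unitaries `u`, `u⋆` of the unitization, and
-- left multiplication by a unitary preserves `N`; hence
-- `2 * N a ^ 2 = N (u * a + u⋆ * a) ≤ 2 * N a`.
lemma le_one_of_isSelfAdjoint (h : IsCStarNorm N) {a : M} (ha : IsSelfAdjoint a)
    (ha₁ : ‖a‖ ≤ 1) : N a ≤ 1 := by
  let _ := CStarAlgebra.spectralOrder (Unitization ℂ M)
  let _ := CStarAlgebra.spectralOrderedRing (Unitization ℂ M)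
  have ha_inr : IsSelfAdjoint (a : Unitization ℂ M) := ha.inr ℂ
  let u := selfAdjoint.unitarySelfAddISMul (⟨a, ha_inr⟩ : selfAdjoint (Unitization ℂ M))
    (by simpa [Unitization.norm_inr] using ha₁)
  have exists_mul (w : Unitization ℂ M) : ∃ y : M, (y : Unitization ℂ M) = w * a :=
    ⟨w.fst • a + w.snd * a, by ext <;> simp⟩
  obtain ⟨y, hy⟩ := exists_mul u
  obtain ⟨z, hz⟩ := exists_mul (star (u : Unitization ℂ M))
  have h_mean : y + z = (2 : ℂ) • (a * a) := by
    refine Unitization.inr_injective (R := ℂ) ?_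
    rw [Unitization.inr_add, hy, hz, selfAdjoint.star_coe_unitarySelfAddISMul,
      selfAdjoint.unitarySelfAddISMul_coe, ← add_mul, add_add_sub_cancel, ← two_smul ℂ,
      smul_mul_assoc, Unitization.inr_smul, Unitization.inr_mul]
  have h_sq : 2 * (N a * N a) ≤ N a + N a := calc
    2 * (N a * N a) = N (y + z) := by
      rw [h_mean, h.smul_eq, ← h.star_mul_self, ha.star_eq, Complex.norm_ofNat]
    _ ≤ N y + N z := h.add_le y z
    _ = N a + N a := by
      rw [h.eq_of_inr_eq_unitary_mul u.2 hy,
        h.eq_of_inr_eq_unitary_mul (Unitary.star_mem u.2) hz]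
  nlinarith

lemma le_norm_of_isSelfAdjoint (h : IsCStarNorm N) {a : M} (ha : IsSelfAdjoint a) :
    N a ≤ ‖a‖ := by
  obtain rfl | h₀ := eq_or_ne a 0
  · simp only [h.map_zero, norm_zero, le_refl]
  have h_pos : 0 < ‖a‖ := norm_pos_iff.2 h₀
  have h_one := h.le_one_of_isSelfAdjoint (a := ((‖a‖⁻¹ : ℝ) : ℂ) • a)
    (.smul (Complex.conj_ofReal _) ha) (by simp [norm_smul, h_pos.ne'])
  rwa [h.smul_eq, Complex.norm_real, norm_inv, norm_norm, inv_mul_le_iff₀ h_pos, mul_one] at h_one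

lemma le_norm (h : IsCStarNorm N) (x : M) : N x ≤ ‖x‖ := by
  refine (mul_self_le_mul_self_iff (h.nonneg x) (norm_nonneg x)).2 ?_
  rw [← h.star_mul_self, ← CStarRing.norm_star_mul_self]
  exact h.le_norm_of_isSelfAdjoint (.star_mul_self x)

lemma norm_le_of_isSelfAdjoint (h : IsCStarNorm N) {a : M} (ha : IsSelfAdjoint a) :
    ‖a‖ ≤ N a := by
  refine le_of_forall_lt_imp_le_of_dense fun r hr ↦ ?_
  obtain hr₀ | hr₀ := le_or_gt r 0
  · exact hr₀.trans (h.nonneg a)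
  obtain ⟨f, g, hf, hg, hfg⟩ := exists_mul_mul_eq_of_lt_norm ha hr₀ hr
  have hNf : 0 < N f := (h.nonneg f).lt_of_ne fun h₀ ↦ hf (h.eq_zero_of f h₀.symm)
  have h_le : N f ≤ N a * r⁻¹ * N f := calc
    N f = N (a * g * f) := by rw [hfg]
    _ ≤ N a * N g * N f :=
      (h.mul_le _ _).trans (mul_le_mul_of_nonneg_right (h.mul_le _ _) hNf.le)
    _ ≤ N a * r⁻¹ * N f := by
      gcongr
      exacts [h.nonneg a, (h.le_norm g).trans hg]
  rwa [le_mul_iff_one_le_left hNf, ← div_eq_mul_inv, one_le_div hr₀] at h_le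

theorem eq_norm (h : IsCStarNorm N) (x : M) : N x = ‖x‖ := by
  refine (h.le_norm x).antisymm ((mul_self_le_mul_self_iff (norm_nonneg x) (h.nonneg x)).2 ?_)
  rw [← h.star_mul_self, ← CStarRing.norm_star_mul_self]
  exact h.norm_le_of_isSelfAdjoint (.star_mul_self x)

end IsCStarNorm

namespace IsCStarNorm

variable {B n : Type*} [NonUnitalCStarAlgebra B] [Fintype n] {N : Matrix n n B → ℝ}

lemma apply_of_const [Unique n] (h : IsCStarNorm N) (b : B) :
    N (Matrix.of fun _ _ ↦ b) = ‖b‖ := by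
  refine eq_norm (N := fun b : B ↦ N (Matrix.of fun _ _ ↦ b)) ⟨fun x y ↦ h.add_le _ _,
    fun c x ↦ h.smul_eq c _, fun x hx ↦ congr_fun₂ (h.eq_zero_of _ hx) default default,
    fun x y ↦ ?_, fun x ↦ ?_⟩ b
  · convert! h.mul_le _ _
    ext
    simp [Matrix.mul_apply]
  · convert! h.star_mul_self _
    ext
    simp [Matrix.mul_apply]

lemma eq_norm_ofMatrix [PartialOrder B] [StarOrderedRing B] (h : IsCStarNorm N)
    (v : Matrix n n B) : N v = ‖CStarMatrix.ofMatrix v‖ :=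
  eq_norm (M := CStarMatrix n n B) ⟨h.1, h.2, h.3, h.4, h.5⟩ v

end IsCStarNorm

section RowBound

open scoped WithCStarModule InnerProductSpace

variable {B : Type*} [NonUnitalCStarAlgebra B]

lemma norm_le_of_forall_norm_mul_mul_le {x : B} {K : ℝ} (hK : 0 ≤ K)
    (h : ∀ c d : B, ‖c * x * d‖ ≤ K * ‖c‖ * ‖d‖) : ‖x‖ ≤ K := by
  rw [← ContinuousLinearMap.opNorm_mul_flip_apply ℂ]
  refine ContinuousLinearMap.opNorm_le_bound _ hK fun c ↦ ?_
  rw [ContinuousLinearMap.flip_apply, ← ContinuousLinearMap.opNorm_mul_apply ℂ]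
  exact ContinuousLinearMap.opNorm_le_bound _ (by positivity) (h c)

variable [PartialOrder B] [StarOrderedRing B] {n : Type*} [Fintype n]

lemma norm_equiv_symm_smul (γ : n → ℂ) (c : B) :
    ‖(WithCStarModule.equiv B (n → B)).symm fun i ↦ γ i • c‖ = √(∑ i, ‖γ i‖ ^ 2) * ‖c‖ := by
  have h_inner : ∑ i, ⟪γ i • c, γ i • c⟫_B = ((∑ i, ‖γ i‖ ^ 2 : ℝ) : ℂ) • (c * star c) := by
    push_cast
    simp only [WithCStarModule.inner_def, star_smul, smul_mul_smul_comm, Finset.sum_smul,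
      ← Complex.mul_conj', starRingEnd_apply]
  refine (pow_left_inj₀ (norm_nonneg _) (by positivity) two_ne_zero).1 ?_
  rw [WithCStarModule.pi_norm_sq]
  simp only [WithCStarModule.equiv_symm_pi_apply]
  rw [h_inner, norm_smul, CStarRing.norm_self_mul_star, Complex.norm_real, Real.norm_of_nonneg
    (by positivity), mul_pow, Real.sq_sqrt (by positivity), sq]

lemma mul_sum_smul_mul_eq_inner (γ β : n → ℂ) (w : CStarMatrix n n B) (c d : B) :
    c * (∑ k, ∑ l, (γ k * β l) • w k l) * d =
      ⟪(WithCStarModule.equiv B (n → B)).symm fun l ↦ star (β l) • star d,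
        CStarMatrix.toCLM w ((WithCStarModule.equiv B (n → B)).symm fun k ↦ γ k • c)⟫_B := by
  simp only [WithCStarModule.pi_inner, CStarMatrix.toCLM_apply_eq_sum,
    WithCStarModule.equiv_symm_pi_apply, WithCStarModule.inner_def, star_smul, star_star,
    Finset.mul_sum, Finset.sum_mul, smul_mul_assoc, mul_smul_comm]
  rw [Finset.sum_comm]
  refine Finset.sum_congr rfl fun l _ ↦ ?_
  rw [Finset.smul_sum]
  exact Finset.sum_congr rfl fun k _ ↦ by rw [mul_comm, mul_smul]

lemma norm_sum_mul_smul_apply_le (γ β : n → ℂ) (w : CStarMatrix n n B) :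
    ‖∑ k, ∑ l, (γ k * β l) • w k l‖ ≤ √(∑ k, ‖γ k‖ ^ 2) * ‖w‖ * √(∑ l, ‖β l‖ ^ 2) := by
  refine norm_le_of_forall_norm_mul_mul_le (by positivity) fun c d ↦ ?_
  set x := (WithCStarModule.equiv B (n → B)).symm fun l ↦ star (β l) • star d
  set y := (WithCStarModule.equiv B (n → B)).symm fun k ↦ γ k • c
  calc ‖c * (∑ k, ∑ l, (γ k * β l) • w k l) * d‖
    _ ≤ ‖x‖ * ‖CStarMatrix.toCLM w y‖ := by
      rw [mul_sum_smul_mul_eq_inner]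
      exact CStarModule.norm_inner_le _
    _ ≤ ‖x‖ * (‖w‖ * ‖y‖) := by
      gcongr
      exact (CStarMatrix.toCLM w).le_opNorm y
    _ = √(∑ k, ‖γ k‖ ^ 2) * ‖w‖ * √(∑ l, ‖β l‖ ^ 2) * ‖c‖ * ‖d‖ := by
      simp only [x, y, norm_equiv_symm_smul, norm_star]
      ring

end RowBound

lemma IsCStarNorm.norm_sum_smul_le {B n : Type*} [NonUnitalCStarAlgebra B] [Fintype n]
    {N : Matrix n n B → ℝ} (h : IsCStarNorm N) (γ β : n → ℂ) (w : Matrix n n B) :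
    ‖∑ k, ∑ l, (γ k * β l) • w k l‖ ≤ √(∑ k, ‖γ k‖ ^ 2) * N w * √(∑ l, ‖β l‖ ^ 2) := by
  let _ := CStarAlgebra.spectralOrder B
  let _ := CStarAlgebra.spectralOrderedRing B
  rw [h.eq_norm_ofMatrix]
  exact norm_sum_mul_smul_apply_le γ β (CStarMatrix.ofMatrix w)

lemma IsCStarNorm.norm_sum_prod_smul_le {B m n : Type*} [NonUnitalCStarAlgebra B] [Fintype m]
    [Fintype n] {N : Matrix n n B → ℝ} (h : IsCStarNorm N) (γ β : m × n → ℂ) (w : Matrix n n B) :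
    ‖∑ j, ∑ k, ∑ l, (γ (j, k) * β (j, l)) • w k l‖ ≤
      √(∑ jk, ‖γ jk‖ ^ 2) * N w * √(∑ jl, ‖β jl‖ ^ 2) := calc
  _ ≤ ∑ j, ‖∑ k, ∑ l, (γ (j, k) * β (j, l)) • w k l‖ := norm_sum_le _ _
  _ ≤ ∑ j, √(∑ k, ‖γ (j, k)‖ ^ 2) * N w * √(∑ l, ‖β (j, l)‖ ^ 2) :=
    Finset.sum_le_sum fun j _ ↦ h.norm_sum_smul_le _ _ w
  _ = (∑ j, √(∑ k, ‖γ (j, k)‖ ^ 2) * √(∑ l, ‖β (j, l)‖ ^ 2)) * N w := by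
    simp only [Finset.sum_mul, mul_right_comm]
  _ ≤ √(∑ j, ∑ k, ‖γ (j, k)‖ ^ 2) * √(∑ j, ∑ l, ‖β (j, l)‖ ^ 2) * N w := by
    have h_nonneg := h.nonneg w
    gcongr
    exact Real.sum_sqrt_mul_sqrt_le _ (fun j ↦ by positivity) fun j ↦ by positivity
  _ = _ := by simp only [Fintype.sum_prod_type, mul_right_comm]

-- Pair the row `y` of the values on the left with its own conjugate in `norm_sum_smul_le`.
lemma IsCStarNorm.sqrt_sum_norm_sum_mul_apply_le {A n : Type*} [NonUnitalCStarAlgebra A]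
    [Fintype n] {N : Matrix n n A → ℝ} (h : IsCStarNorm N) (f : StrongDual ℂ A) (γ : n → ℂ)
    (v : Matrix n n A) :
    √(∑ j, ‖∑ i, γ i * f (v i j)‖ ^ 2) ≤ ‖f‖ * N v * √(∑ i, ‖γ i‖ ^ 2) := by
  set y : n → ℂ := fun j ↦ ∑ i, γ i * f (v i j)
  set s := √(∑ j, ‖y j‖ ^ 2)
  have h_apply : f (∑ i, ∑ j, (γ i * star (y j)) • v i j) = ((s ^ 2 : ℝ) : ℂ) := by
    rw [Real.sq_sqrt (by positivity), Finset.sum_comm]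
    push_cast
    simp only [map_sum, map_smul, smul_eq_mul, ← Complex.mul_conj', starRingEnd_apply]
    refine Finset.sum_congr rfl fun j _ ↦ ?_
    simp only [y, Finset.sum_mul, mul_right_comm]
  have h_sq : s ^ 2 ≤ ‖f‖ * N v * √(∑ i, ‖γ i‖ ^ 2) * s := calc
    s ^ 2 = ‖f (∑ i, ∑ j, (γ i * star (y j)) • v i j)‖ := by
      rw [h_apply, Complex.norm_real, Real.norm_of_nonneg (by positivity)]
    _ ≤ ‖f‖ * (√(∑ i, ‖γ i‖ ^ 2) * N v * √(∑ j, ‖star (y j)‖ ^ 2)) :=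
      f.le_opNorm_of_le (h.norm_sum_smul_le _ _ v)
    _ = _ := by
      simp only [norm_star]
      ring
  have h_nonneg := h.nonneg v
  by_contra! h_lt
  have hs : 0 < s := lt_of_le_of_lt (by positivity) h_lt
  nlinarith

section TensorProduct

variable {A B : Type u}

section Algebraic

variable [AddCommGroup A] [Module ℂ A] [AddCommGroup B] [Module ℂ B]

/-- The slice map `f ⊗ id : A ⊗ B → B` of a linear functional `f` on `A`. -/
def sliceMap (B : Type u) [AddCommGroup B] [Module ℂ B] (f : A →ₗ[ℂ] ℂ) : A ⊗[ℂ] B →ₗ[ℂ] B :=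
  TensorProduct.lid ℂ B ∘ₗ f.rTensor B

@[simp]
lemma sliceMap_tmul (f : A →ₗ[ℂ] ℂ) (a : A) (b : B) : sliceMap B f (a ⊗ₜ b) = f a • b := by
  simp only [sliceMap, LinearMap.comp_apply, LinearMap.rTensor_tmul, LinearEquiv.coe_coe,
    TensorProduct.lid_tmul]

lemma sliceMap_sum_smul_tmul {m n : Type*} [Fintype m] [Fintype n] (f : A →ₗ[ℂ] ℂ)
    (α β : m × n → ℂ) (v : Matrix m m A) (w : Matrix n n B) :
    sliceMap B f (∑ ik, ∑ jl, (α ik * β jl) • (v ik.1 jl.1 ⊗ₜ[ℂ] w ik.2 jl.2)) =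
      ∑ j, ∑ k, ∑ l, ((∑ i, α (i, k) * f (v i j)) * β (j, l)) • w k l := by
  simp only [map_sum, map_smul, sliceMap_tmul, Fintype.sum_prod_type, Finset.sum_mul,
    Finset.sum_smul, smul_smul, mul_right_comm _ (f _)]
  calc
    _ = ∑ i, ∑ j, ∑ k, ∑ l, (α (i, k) * β (j, l) * f (v i j)) • w k l :=
      Finset.sum_congr rfl fun i _ ↦ Finset.sum_comm
    _ = ∑ j, ∑ i, ∑ k, ∑ l, (α (i, k) * β (j, l) * f (v i j)) • w k l := Finset.sum_comm
    _ = _ := Finset.sum_congr rfl fun j _ ↦ by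
      rw [Finset.sum_comm]
      exact Finset.sum_congr rfl fun k _ ↦ Finset.sum_comm

lemma exists_eq_sum_smul_tmul (u : A ⊗[ℂ] B) :
    ∃ (p q : ℕ) (α : Fin p × Fin q → ℂ) (v : Matrix (Fin p) (Fin p) A)
      (w : Matrix (Fin q) (Fin q) B) (β : Fin p × Fin q → ℂ),
      u = ∑ ik, ∑ jl, (α ik * β jl) • (v ik.1 jl.1 ⊗ₜ[ℂ] w ik.2 jl.2) := by
  obtain ⟨n, a, b, rfl⟩ := TensorProduct.exists_sum_tmul_eq u
  refine ⟨n, n, fun ik ↦ if ik.1 = ik.2 then 1 else 0, Matrix.diagonal a, fun k _ ↦ b k,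
    fun jl ↦ if jl.1 = jl.2 then 1 else 0, ?_⟩
  simp [Fintype.sum_prod_type, Matrix.diagonal_apply, TensorProduct.ite_tmul]

variable {NA : ∀ p : ℕ, Matrix (Fin p) (Fin p) A → ℝ} {NB : ∀ q : ℕ, Matrix (Fin q) (Fin q) B → ℝ}

lemma le_osProjNorm {c : ℝ} {u : A ⊗[ℂ] B}
    (h : ∀ (p q : ℕ) (α : Fin p × Fin q → ℂ) (v : Matrix (Fin p) (Fin p) A)
      (w : Matrix (Fin q) (Fin q) B) (β : Fin p × Fin q → ℂ),
      u = ∑ ik, ∑ jl, (α ik * β jl) • (v ik.1 jl.1 ⊗ₜ[ℂ] w ik.2 jl.2) →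
      c ≤ √(∑ ik, ‖α ik‖ ^ 2) * NA p v * NB q w * √(∑ jl, ‖β jl‖ ^ 2)) :
    c ≤ osProjNorm NA NB u := by
  obtain ⟨p, q, α, v, w, β, hu⟩ := exists_eq_sum_smul_tmul u
  refine le_csInf ⟨_, p, q, α, v, w, β, hu, rfl⟩ ?_
  rintro _ ⟨p, q, α, v, w, β, hu, rfl⟩
  exact h p q α v w β hu

end Algebraic

variable [NonUnitalCStarAlgebra A] [NonUnitalCStarAlgebra B]
  {NA : ∀ p : ℕ, Matrix (Fin p) (Fin p) A → ℝ} {NB : ∀ q : ℕ, Matrix (Fin q) (Fin q) B → ℝ}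

lemma osProjNorm_le (hNA : ∀ p, IsCStarNorm (NA p)) (hNB : ∀ q, IsCStarNorm (NB q)) {p q : ℕ}
    (α : Fin p × Fin q → ℂ) (v : Matrix (Fin p) (Fin p) A) (w : Matrix (Fin q) (Fin q) B)
    (β : Fin p × Fin q → ℂ) :
    osProjNorm NA NB (∑ ik, ∑ jl, (α ik * β jl) • (v ik.1 jl.1 ⊗ₜ[ℂ] w ik.2 jl.2)) ≤
      √(∑ ik, ‖α ik‖ ^ 2) * NA p v * NB q w * √(∑ jl, ‖β jl‖ ^ 2) := by
  refine csInf_le ⟨0, ?_⟩ ⟨p, q, α, v, w, β, rfl, rfl⟩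
  rintro _ ⟨p, q, α, v, w, β, -, rfl⟩
  have hv := (hNA p).nonneg v
  have hw := (hNB q).nonneg w
  positivity

lemma osProjNorm_tmul_le (hNA : ∀ p, IsCStarNorm (NA p)) (hNB : ∀ q, IsCStarNorm (NB q))
    (a : A) (b : B) : osProjNorm NA NB (a ⊗ₜ[ℂ] b) ≤ ‖a‖ * ‖b‖ := by
  have h_le := osProjNorm_le hNA hNB (p := 1) (q := 1) 1 (Matrix.of fun _ _ ↦ a)
    (Matrix.of fun _ _ ↦ b) 1
  rw [(hNA 1).apply_of_const, (hNB 1).apply_of_const] at h_le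
  simpa using h_le

lemma norm_sliceMap_le (hNA : ∀ p, IsCStarNorm (NA p)) (hNB : ∀ q, IsCStarNorm (NB q))
    (f : StrongDual ℂ A) (u : A ⊗[ℂ] B) :
    ‖sliceMap B (f : A →ₗ[ℂ] ℂ) u‖ ≤ ‖f‖ * osProjNorm NA NB u := by
  obtain hf | hf := (norm_nonneg f).eq_or_lt
  · obtain rfl := norm_eq_zero.1 hf.symm
    simp [sliceMap]
  rw [← div_le_iff₀' hf]
  refine le_osProjNorm fun p q α v w β hu ↦ (div_le_iff₀' hf).2 ?_
  have hv := (hNA p).nonneg v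
  have hw := (hNB q).nonneg w
  let γ : Fin p × Fin q → ℂ := fun jk ↦ ∑ i, α (i, jk.2) * f (v i jk.1)
  have hγ : √(∑ jk, ‖γ jk‖ ^ 2) ≤ ‖f‖ * NA p v * √(∑ ik, ‖α ik‖ ^ 2) := by
    refine Real.sqrt_le_iff.2 ⟨by positivity, ?_⟩
    rw [mul_pow, Real.sq_sqrt (by positivity), Fintype.sum_prod_type_right,
      Fintype.sum_prod_type_right, Finset.mul_sum]
    refine Finset.sum_le_sum fun k _ ↦ ?_
    have h_col := (hNA p).sqrt_sum_norm_sum_mul_apply_le f (fun i ↦ α (i, k)) v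
    rw [Real.sqrt_le_iff, mul_pow, Real.sq_sqrt (by positivity)] at h_col
    exact h_col.2
  calc ‖sliceMap B (f : A →ₗ[ℂ] ℂ) u‖
    _ = ‖∑ j, ∑ k, ∑ l, (γ (j, k) * β (j, l)) • w k l‖ := by
      rw [hu, sliceMap_sum_smul_tmul]
      rfl
    _ ≤ √(∑ jk, ‖γ jk‖ ^ 2) * NB q w * √(∑ jl, ‖β jl‖ ^ 2) := (hNB q).norm_sum_prod_smul_le γ β w
    _ ≤ ‖f‖ * NA p v * √(∑ ik, ‖α ik‖ ^ 2) * NB q w * √(∑ jl, ‖β jl‖ ^ 2) := by gcongr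
    _ = _ := by ring

lemma osProjNorm_comm_le (hNA : ∀ p, IsCStarNorm (NA p)) (hNB : ∀ q, IsCStarNorm (NB q))
    (u : A ⊗[ℂ] B) :
    osProjNorm NB NA (TensorProduct.comm ℂ A B u) ≤ osProjNorm NA NB u := by
  refine le_osProjNorm fun p q α v w β hu ↦ ?_
  convert! osProjNorm_le hNB hNA (α ∘ Prod.swap) w v (β ∘ Prod.swap) using 1
  · simp only [hu, map_sum, map_smul, TensorProduct.comm_tmul]
    rw [← (Equiv.prodComm (Fin q) (Fin p)).sum_comp]
    exact congrArg _ (Finset.sum_congr rfl fun ik _ ↦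
      ((Equiv.prodComm (Fin q) (Fin p)).sum_comp _).symm)
  · rw [← (Equiv.prodComm (Fin q) (Fin p)).sum_comp (fun ik ↦ ‖α ik‖ ^ 2),
      ← (Equiv.prodComm (Fin q) (Fin p)).sum_comp (fun jl ↦ ‖β jl‖ ^ 2)]
    simp only [Equiv.prodComm_apply, Function.comp_apply]
    ring

lemma osProjNorm_comm (hNA : ∀ p, IsCStarNorm (NA p)) (hNB : ∀ q, IsCStarNorm (NB q))
    (u : A ⊗[ℂ] B) :
    osProjNorm NB NA (TensorProduct.comm ℂ A B u) = osProjNorm NA NB u :=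
  (osProjNorm_comm_le hNA hNB u).antisymm <| by
    simpa only [TensorProduct.comm_comm] using
      osProjNorm_comm_le hNB hNA (TensorProduct.comm ℂ A B u)

lemma IsTensorCompletion.comm {X : Type u} [NonUnitalNormedRing X] [StarRing X] [NormedSpace ℂ X]
    [CompleteSpace X] {ι : A ⊗[ℂ] B →ₗ[ℂ] X} (hNA : ∀ p, IsCStarNorm (NA p))
    (hNB : ∀ q, IsCStarNorm (NB q)) (hX : IsTensorCompletion (osProjNorm NA NB) X ι) :
    IsTensorCompletion (osProjNorm NB NA) X (ι ∘ₗ (TensorProduct.comm ℂ B A).toLinearMap) where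
  norm_eq u := by
    rw [LinearMap.comp_apply, hX.norm_eq, LinearEquiv.coe_coe, osProjNorm_comm hNB hNA]
  dense := by
    simpa only [DenseRange, LinearMap.coe_comp, LinearEquiv.coe_coe, EquivLike.range_comp] using
      hX.dense
  mul_tmul b d a c := by simp [hX.mul_tmul]
  star_tmul b a := by simp [hX.star_tmul]

end TensorProduct

section BoundedSlices

variable {A B : Type u} [AddCommGroup A] [Module ℂ A] [NormedAddCommGroup B] [NormedSpace ℂ B]

/-- A linear map `φ` on `A ⊗ B` for which, for fixed `a`, the map `b ↦ φ (a ⊗ b)` is bounded and,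
for a fixed functional `f` on `A`, the slice `(f ⊗ id) u` is bounded by `φ u`. For
finite-dimensional `A` this determines the norm `u ↦ ‖φ u‖` up to equivalence. -/
structure HasBoundedSlices {Z : Type*} [NormedAddCommGroup Z] [NormedSpace ℂ Z]
    (φ : A ⊗[ℂ] B →ₗ[ℂ] Z) : Prop where
  bounded_tmul : ∀ a, ∃ K, ∀ b, ‖φ (a ⊗ₜ b)‖ ≤ K * ‖b‖
  bounded_sliceMap : ∀ f : A →ₗ[ℂ] ℂ, ∃ K, ∀ u, ‖sliceMap B f u‖ ≤ K * ‖φ u‖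

lemma sum_basis_tmul_sliceMap {κ : Type*} [Fintype κ] (e : Module.Basis κ ℂ A) (u : A ⊗[ℂ] B) :
    ∑ i, e i ⊗ₜ sliceMap B (e.coord i) u = u := by
  induction u with
  | zero => simp only [map_zero, TensorProduct.tmul_zero, Finset.sum_const_zero]
  | tmul a b =>
    simp only [sliceMap_tmul, ← TensorProduct.smul_tmul, ← TensorProduct.sum_tmul,
      Module.Basis.coord_apply, e.sum_repr]
  | add u v hu hv =>
    simp only [map_add, TensorProduct.tmul_add, Finset.sum_add_distrib, hu, hv]

lemma hasBoundedSlices_pi_sliceMap {κ : Type*} [Fintype κ] (e : Module.Basis κ ℂ A) :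
    HasBoundedSlices (LinearMap.pi fun i ↦ sliceMap B (e.coord i)) where
  bounded_tmul a := by
    refine ⟨∑ i, ‖e.coord i a‖, fun b ↦ (pi_norm_le_iff_of_nonneg (by positivity)).2 fun i ↦ ?_⟩
    rw [LinearMap.pi_apply, sliceMap_tmul, norm_smul]
    gcongr
    exact Finset.single_le_sum (fun j _ ↦ norm_nonneg (e.coord j a)) (Finset.mem_univ i)
  bounded_sliceMap f := by
    refine ⟨∑ i, ‖f (e i)‖, fun u ↦ ?_⟩
    rw [← sum_basis_tmul_sliceMap e u, map_sum, sum_basis_tmul_sliceMap, Finset.sum_mul]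
    refine (norm_sum_le _ _).trans (Finset.sum_le_sum fun i _ ↦ ?_)
    rw [sliceMap_tmul, norm_smul]
    gcongr
    exact norm_le_pi_norm ((LinearMap.pi fun i ↦ sliceMap B (e.coord i)) u) i

namespace HasBoundedSlices

variable {Z W : Type*} [NormedAddCommGroup Z] [NormedSpace ℂ Z] [NormedAddCommGroup W]
  [NormedSpace ℂ W] [FiniteDimensional ℂ A] {φ : A ⊗[ℂ] B →ₗ[ℂ] Z} {ψ : A ⊗[ℂ] B →ₗ[ℂ] W}

lemma exists_norm_le (hφ : HasBoundedSlices φ) (hψ : HasBoundedSlices ψ) :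
    ∃ K, ∀ u, ‖φ u‖ ≤ K * ‖ψ u‖ := by
  let e := Module.finBasis ℂ A
  choose K hK using fun i ↦ hφ.bounded_tmul (e i)
  choose L hL using fun i ↦ hψ.bounded_sliceMap (e.coord i)
  refine ⟨∑ i, |K i| * L i, fun u ↦ ?_⟩
  calc ‖φ u‖
    _ = ‖∑ i, φ (e i ⊗ₜ sliceMap B (e.coord i) u)‖ := by rw [← map_sum, sum_basis_tmul_sliceMap]
    _ ≤ ∑ i, |K i| * (L i * ‖ψ u‖) := norm_sum_le_of_le _ fun i _ ↦ (hK i _).trans <| by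
      gcongr
      exacts [le_abs_self _, hL i u]
    _ = (∑ i, |K i| * L i) * ‖ψ u‖ := by simp only [Finset.sum_mul, mul_assoc]

lemma injective (hφ : HasBoundedSlices φ) : Function.Injective φ := by
  refine (injective_iff_map_eq_zero φ).2 fun u hu ↦ ?_
  rw [← sum_basis_tmul_sliceMap (Module.finBasis ℂ A) u]
  refine Finset.sum_eq_zero fun i _ ↦ ?_
  obtain ⟨K, hK⟩ := hφ.bounded_sliceMap ((Module.finBasis ℂ A).coord i)
  have h_slice : ‖sliceMap B ((Module.finBasis ℂ A).coord i) u‖ ≤ 0 := by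
    simpa only [hu, norm_zero, mul_zero] using hK u
  rw [norm_le_zero_iff.1 h_slice, TensorProduct.tmul_zero]

lemma isClosed_range [CompleteSpace B] (hφ : HasBoundedSlices φ) : IsClosed (Set.range φ) := by
  let e := Module.finBasis ℂ A
  have h_coord := hasBoundedSlices_pi_sliceMap (B := B) e
  let τ := LinearEquiv.ofBijective (LinearMap.pi fun i ↦ sliceMap B (e.coord i))
    ⟨h_coord.injective, fun x ↦ ⟨∑ i, e i ⊗ₜ x i, by
      ext j
      simp [Finsupp.single_apply]⟩⟩
  obtain ⟨K, hK⟩ := hφ.exists_norm_le h_coord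
  obtain ⟨L, hL⟩ := h_coord.exists_norm_le hφ
  let Φ := (φ ∘ₗ τ.symm.toLinearMap).mkContinuous K fun x ↦
    (hK (τ.symm x)).trans_eq (congrArg (K * ‖·‖) (τ.apply_symm_apply x))
  have h_anti : AntilipschitzWith L.toNNReal Φ :=
    AddMonoidHomClass.antilipschitz_of_bound Φ fun x ↦
      calc ‖x‖
        _ = ‖τ (τ.symm x)‖ := by rw [τ.apply_symm_apply]
        _ ≤ L * ‖Φ x‖ := hL (τ.symm x)
        _ ≤ L.toNNReal * ‖Φ x‖ := by gcongr; exact L.le_coe_toNNReal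
  have h_range : Set.range Φ = Set.range φ := EquivLike.range_comp φ τ.symm
  exact h_range ▸ h_anti.isClosed_range Φ.uniformContinuous

end HasBoundedSlices

end BoundedSlices

section States

open scoped ComplexOrder

variable {M : Type*} [CStarAlgebra M]

lemma norm_add_I_smul_one_sq_le {h : M} (hh : IsSelfAdjoint h) (t : ℝ) :
    ‖h + (t * Complex.I) • (1 : M)‖ ^ 2 ≤ ‖h‖ ^ 2 + t ^ 2 := by
  cases subsingleton_or_nontrivial M
  · rw [Subsingleton.elim (h + (t * Complex.I) • (1 : M)) 0, norm_zero, zero_pow two_ne_zero]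
    positivity
  have h_star_mul : star (h + (t * Complex.I) • (1 : M)) * (h + (t * Complex.I) • (1 : M)) =
      h * h + ((t ^ 2 : ℝ) : ℂ) • (1 : M) := by
    have h_star : star (t * Complex.I) = -(t * Complex.I) := by simp
    have h_sq : t * Complex.I * (t * Complex.I) = -((t ^ 2 : ℝ) : ℂ) := by
      push_cast
      linear_combination (t : ℂ) ^ 2 * Complex.I_sq
    simp only [star_add, star_smul, hh.star_eq, star_one, h_star, add_mul, mul_add,
      smul_mul_assoc, mul_smul_comm, one_mul, mul_one, smul_add, smul_smul, neg_mul, h_sq, neg_neg,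
      neg_smul, smul_neg]
    abel
  rw [sq, ← CStarRing.norm_star_mul_self, h_star_mul]
  refine (norm_add_le _ _).trans (add_le_add ((norm_mul_le h h).trans_eq (sq _).symm) ?_)
  rw [norm_smul, norm_one, mul_one, Complex.norm_of_nonneg (sq_nonneg t)]

lemma im_apply_eq_zero_of_norm_le_one {g : StrongDual ℂ M} (hg : ‖g‖ ≤ 1) (hg_one : g 1 = 1)
    {h : M} (hh : IsSelfAdjoint h) : (g h).im = 0 := by
  have h_sq_le (t : ℝ) : ((g h).im + t) ^ 2 ≤ ‖h‖ ^ 2 + t ^ 2 := by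
    refine le_trans ?_ (norm_add_I_smul_one_sq_le hh t)
    rw [← sq_abs]
    gcongr
    calc |(g h).im + t|
      _ = |(g (h + (t * Complex.I) • (1 : M))).im| := by simp [hg_one]
      _ ≤ ‖g (h + (t * Complex.I) • (1 : M))‖ := Complex.abs_im_le_norm _
      _ ≤ 1 * ‖h + (t * Complex.I) • (1 : M)‖ := g.le_of_opNorm_le hg _
      _ = ‖h + (t * Complex.I) • (1 : M)‖ := one_mul _
  by_contra h_im
  have h_large := h_sq_le (‖h‖ ^ 2 / (g h).im)
  have h_pos : 0 < (g h).im ^ 2 := by positivity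
  have h_cross : (g h).im * (‖h‖ ^ 2 / (g h).im) = ‖h‖ ^ 2 := mul_div_cancel₀ _ h_im
  nlinarith [sq_nonneg ‖h‖]

variable [PartialOrder M] [StarOrderedRing M]

lemma apply_nonneg_of_norm_le_one {g : StrongDual ℂ M} (hg : ‖g‖ ≤ 1) (hg_one : g 1 = 1)
    {x : M} (hx : 0 ≤ x) : 0 ≤ g x := by
  have hx_sa := IsSelfAdjoint.of_nonneg hx
  refine Complex.nonneg_iff.2 ⟨?_, (im_apply_eq_zero_of_norm_le_one hg hg_one hx_sa).symm⟩
  have h_norm : ‖algebraMap ℝ M ‖x‖ - x‖ ≤ ‖x‖ := by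
    rw [CStarAlgebra.norm_le_iff_le_algebraMap _ (norm_nonneg _)
      (sub_nonneg.2 hx_sa.le_algebraMap_norm_self)]
    exact sub_le_self _ hx
  have h_re : (g (algebraMap ℝ M ‖x‖ - x)).re ≤ ‖x‖ :=
    (Complex.re_le_norm _).trans ((g.le_of_opNorm_le_of_le hg h_norm).trans_eq (one_mul _))
  rw [map_sub, Algebra.algebraMap_eq_smul_one, ← Complex.coe_smul, map_smul, hg_one] at h_re
  simpa using h_re

variable [Nontrivial M]

lemma norm_one_add_of_nonneg {a : M} (ha : 0 ≤ a) : ‖1 + a‖ = 1 + ‖a‖ := by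
  refine le_antisymm ((norm_add_le _ _).trans_eq (by rw [norm_one])) ?_
  have h_mem : ‖a‖ + 1 ∈ spectrum ℝ (1 + a) := by
    simpa [add_comm] using
      spectrum.add_mem_add_iff (s := (1 : ℝ)).2 (CStarAlgebra.norm_mem_spectrum_of_nonneg ha)
  simpa [abs_of_nonneg, add_nonneg, add_comm] using spectrum.norm_le_norm_of_mem h_mem

/- A functional of norm one attaining its norm at `1 + a` attains it at both `1` and `a`, because
`‖1 + a‖ = ‖1‖ + ‖a‖`. -/
lemma exists_positiveLinearMap_apply_eq_norm {a : M} (ha : 0 ≤ a) :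
    ∃ f : M →ₚ[ℂ] ℂ, f 1 = 1 ∧ f a = ‖a‖ := by
  have h_ne : ‖1 + a‖ ≠ 0 := by
    rw [norm_one_add_of_nonneg ha]
    positivity
  obtain ⟨g, hg, hg_apply⟩ := exists_dual_vector ℂ (1 + a) h_ne
  have h_le (x : M) : ‖g x‖ ≤ ‖x‖ := by simpa using g.le_of_opNorm_le hg.le x
  have h_re : (g 1).re + (g a).re = 1 + ‖a‖ := by
    rw [norm_one_add_of_nonneg ha, map_add] at hg_apply
    simpa using congrArg Complex.re hg_apply
  have h_le_one : ‖g 1‖ ≤ 1 := (h_le 1).trans_eq norm_one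
  have eq_of_le {z : ℂ} {r : ℝ} (hz : ‖z‖ ≤ r) (hr : r ≤ z.re) : z = r := by
    rw [RCLike.norm_le_re_iff_eq_norm.1 (hz.trans hr), le_antisymm hz (hr.trans z.re_le_norm)]
    rfl
  have hg_one : g 1 = 1 := by
    simpa using eq_of_le h_le_one (by linarith [(g a).re_le_norm, h_le a])
  have hg_a : g a = ‖a‖ := eq_of_le (h_le a) (by linarith [(g 1).re_le_norm])
  exact ⟨.mk₀ g.toLinearMap fun _ ↦ apply_nonneg_of_norm_le_one hg.le hg_one, hg_one, hg_a⟩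

end States

section GelfandNaimark

variable {I : Type*} {H : I → Type*} [∀ i, NormedAddCommGroup (H i)]
  [∀ i, InnerProductSpace ℂ (H i)] [∀ i, CompleteSpace (H i)] {M : Type*} [NonUnitalCStarAlgebra M]

/-- The Hilbert space direct sum of a family of representations of a C⋆-algebra, acting
block-diagonally on the `ℓ²`-sum of the Hilbert spaces. -/
def lpDirectSumRep (ρ : ∀ i, M →⋆ₙₐ[ℂ] (H i →L[ℂ] H i)) : M →⋆ₙₐ[ℂ] (lp H 2 →L[ℂ] lp H 2) where
  toFun a := lp.mapCLM 2 (fun i ↦ ρ i a) (norm_nonneg a)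
    fun i ↦ NonUnitalStarAlgHom.norm_apply_le (ρ i) a
  map_smul' c a := by ext x i; simp
  map_zero' := by ext x i; simp
  map_add' a b := by ext x i; simp
  map_mul' a b := by ext x i; simp
  map_star' a := by
    refine (ContinuousLinearMap.eq_adjoint_iff _ _).2 fun x y ↦ ?_
    simp only [lp.inner_eq_tsum, lp.mapCLM_apply_coe, map_star, ContinuousLinearMap.star_eq_adjoint,
      ContinuousLinearMap.adjoint_inner_left]

lemma norm_apply_le_norm_lpDirectSumRep (ρ : ∀ i, M →⋆ₙₐ[ℂ] (H i →L[ℂ] H i)) (a : M) (i : I)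
    (v : H i) : ‖ρ i a v‖ ≤ ‖lpDirectSumRep ρ a‖ * ‖v‖ := by
  classical
  calc ‖ρ i a v‖
    _ = ‖lpDirectSumRep ρ a (lp.single 2 i v) i‖ := by simp [lpDirectSumRep]
    _ ≤ ‖lpDirectSumRep ρ a (lp.single 2 i v)‖ := lp.norm_apply_le_norm (by simp) _ i
    _ ≤ ‖lpDirectSumRep ρ a‖ * ‖v‖ := by
      simpa [lp.norm_single] using (lpDirectSumRep ρ a).le_opNorm (lp.single 2 i v)

open scoped ComplexOrder

lemma norm_gnsNonUnitalStarAlgHom_toPreGNS_one {M : Type*} [CStarAlgebra M] [PartialOrder M]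
    [StarOrderedRing M] (f : M →ₚ[ℂ] ℂ) (a : M) :
    ‖f.gnsNonUnitalStarAlgHom a (f.toPreGNS 1 : f.PreGNS)‖ = √(f (star a * a)).re := by
  rw [f.gnsNonUnitalStarAlgHom_apply_coe, UniformSpace.Completion.norm_coe, f.preGNS_norm_def,
    f.leftMulMapPreGNS_apply, f.ofPreGNS_toPreGNS, f.ofPreGNS_toPreGNS, mul_one]

lemma exists_norm_gnsNonUnitalStarAlgHom_apply_eq {M : Type*} [CStarAlgebra M] [Nontrivial M]
    [PartialOrder M] [StarOrderedRing M] (a : M) :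
    ∃ (f : M →ₚ[ℂ] ℂ) (v : f.GNS), ‖v‖ = 1 ∧ ‖f.gnsNonUnitalStarAlgHom a v‖ = ‖a‖ := by
  obtain ⟨f, hf_one, hfa⟩ := exists_positiveLinearMap_apply_eq_norm (star_mul_self_nonneg a)
  refine ⟨f, (f.toPreGNS 1 : f.PreGNS), ?_, ?_⟩
  · rw [UniformSpace.Completion.norm_coe, f.preGNS_norm_def, f.ofPreGNS_toPreGNS, star_one,
      one_mul, hf_one, Complex.one_re, Real.sqrt_one]
  · rw [norm_gnsNonUnitalStarAlgHom_toPreGNS_one, hfa, Complex.ofReal_re,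
      CStarRing.norm_star_mul_self, Real.sqrt_mul_self (norm_nonneg a)]

theorem exists_isometric_rep (M : Type u) [NonUnitalCStarAlgebra M] :
    ∃ (K : Type u) (_ : NormedAddCommGroup K) (_ : InnerProductSpace ℂ K) (_ : CompleteSpace K)
      (ρ : M →⋆ₙₐ[ℂ] (K →L[ℂ] K)), Isometry ρ := by
  let _ := CStarAlgebra.spectralOrder (Unitization ℂ M)
  have _ := CStarAlgebra.spectralOrderedRing (Unitization ℂ M)
  choose f v hv hfv using
    fun a : M ↦ exists_norm_gnsNonUnitalStarAlgHom_apply_eq (a : Unitization ℂ M)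
  let ρ (a : M) := (f a).gnsNonUnitalStarAlgHom.comp (Unitization.inrNonUnitalStarAlgHom ℂ M)
  refine ⟨lp (fun a ↦ (f a).GNS) 2, inferInstance, inferInstance, inferInstance,
    lpDirectSumRep ρ, AddMonoidHomClass.isometry_of_norm _ fun a ↦
      (NonUnitalStarAlgHom.norm_apply_le _ a).antisymm ?_⟩
  calc ‖a‖
    _ = ‖ρ a a (v a)‖ := ((hfv a).trans (Unitization.norm_inr a)).symm
    _ ≤ ‖lpDirectSumRep ρ a‖ * ‖v a‖ := norm_apply_le_norm_lpDirectSumRep ρ a a (v a)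
    _ = ‖lpDirectSumRep ρ a‖ := by rw [hv, mul_one]

end GelfandNaimark

section FiniteDimensional

open scoped InnerProductSpace

lemma exists_finset_separating {R A K V : Type*} [CommRing R] [AddCommGroup A] [Module R A]
    [IsArtinian R A] [AddCommGroup K] [Module R K] [AddCommGroup V] [Module R V]
    {ρ : A →ₗ[R] K →ₗ[R] V} (hρ : Function.Injective ρ) :
    ∃ s : Finset K, ∀ a, (∀ ξ ∈ s, ρ a ξ = 0) → a = 0 := by
  obtain ⟨s, hs⟩ := Finset.exists_inf_le fun ξ ↦ LinearMap.ker (ρ.flip ξ)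
  refine ⟨s, fun a ha ↦ (map_eq_zero_iff ρ hρ).1 (LinearMap.ext fun ξ ↦ hs ξ ?_)⟩
  simpa only [Submodule.mem_finsetInf, LinearMap.mem_ker, LinearMap.flip_apply] using ha

variable {A K : Type*} [NormedAddCommGroup K] [InnerProductSpace ℂ K] [CompleteSpace K]

/-- The compression of a representation `ρ` to the span of a family `b`, as matrices
`(⟪b i, ρ a (b j)⟫)`. For orthonormal `b`, the condition `hb` says that the span is invariant
under `ρ`; it makes the compression multiplicative. -/
def compressedRep [NonUnitalRing A] [StarRing A] [Module ℂ A] {n : Type*} [Fintype n]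
    (ρ : A →⋆ₙₐ[ℂ] (K →L[ℂ] K)) (b : n → K)
    (hb : ∀ a j, ∑ i, ⟪b i, ρ a (b j)⟫_ℂ • b i = ρ a (b j)) : A →⋆ₙₐ[ℂ] Matrix n n ℂ where
  toFun a := .of fun i j ↦ ⟪b i, ρ a (b j)⟫_ℂ
  map_smul' c a := by ext; simp
  map_zero' := by ext; simp
  map_add' a c := by ext; simp
  map_mul' a c := by
    ext i j
    simp only [map_mul, mul_apply_eq_comp, Matrix.of_apply, Matrix.mul_apply]
    nth_rw 1 [← hb c j]
    simp only [map_sum, map_smul, inner_sum, inner_smul_right, mul_comm]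
  map_star' a := by
    ext i j
    simp only [map_star, ContinuousLinearMap.star_eq_adjoint,
      ContinuousLinearMap.adjoint_inner_right, Matrix.of_apply, Matrix.star_apply, RCLike.star_def,
      inner_conj_symm]

variable [NonUnitalCStarAlgebra A] [FiniteDimensional ℂ A]

lemma exists_finiteDimensional_invariant_separating {ρ : A →⋆ₙₐ[ℂ] (K →L[ℂ] K)}
    (hρ : Function.Injective ρ) :
    ∃ V : Submodule ℂ K, FiniteDimensional ℂ V ∧ (∀ a, ∀ v ∈ V, ρ a v ∈ V) ∧
      ∀ a, (∀ v ∈ V, ρ a v = 0) → a = 0 := by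
  let L : A →ₗ[ℂ] K →ₗ[ℂ] K := ContinuousLinearMap.coeLM ℂ ∘ₗ (ρ : A →ₗ[ℂ] K →L[ℂ] K)
  obtain ⟨s, hs⟩ := exists_finset_separating (ρ := L) (ContinuousLinearMap.coe_injective.comp hρ)
  let V : Submodule ℂ K := s.sup fun ξ ↦ LinearMap.range (L.flip ξ)
  have mem_V {ξ : K} (hξ : ξ ∈ s) (a : A) : ρ a ξ ∈ V :=
    Finset.le_sup (f := fun ξ ↦ LinearMap.range (L.flip ξ)) hξ ⟨a, rfl⟩
  refine ⟨V, inferInstance, fun a ↦ ?_, fun a ha ↦ ?_⟩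
  · have h_le : V ≤ V.comap (L a) := by
      refine Finset.sup_le fun ξ hξ ↦ ?_
      rintro _ ⟨c, rfl⟩
      simpa [L] using mem_V hξ (a * c)
    exact h_le
  · rw [← CStarRing.mul_star_self_eq_zero_iff]
    exact hs _ fun ξ hξ ↦ by simpa [L] using ha _ (mem_V hξ (star a))

theorem exists_injective_matrix_rep (A : Type u) [NonUnitalCStarAlgebra A]
    [FiniteDimensional ℂ A] :
    ∃ (n : ℕ) (π : A →⋆ₙₐ[ℂ] Matrix (Fin n) (Fin n) ℂ), Function.Injective π := by
  obtain ⟨K, _, _, _, ρ, hρ⟩ := exists_isometric_rep A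
  obtain ⟨V, _, h_inv, h_sep⟩ := exists_finiteDimensional_invariant_separating hρ.injective
  let b := stdOrthonormalBasis ℂ V
  have hb (a : A) (v : V) : ∑ i, ⟪(b i : K), ρ a v⟫_ℂ • (b i : K) = ρ a v := by
    simpa using congrArg Subtype.val (b.sum_repr' ⟨ρ a v, h_inv a v v.2⟩)
  refine ⟨_, compressedRep ρ (fun i ↦ (b i : K)) fun a j ↦ hb a (b j),
    (injective_iff_map_eq_zero _).2 fun a ha ↦ h_sep a fun v hv ↦ ?_⟩
  have h_basis (j) : ρ a (b j) = 0 := by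
    rw [← hb]
    exact Finset.sum_eq_zero fun i _ ↦ by
      rw [show ⟪(b i : K), ρ a (b j)⟫_ℂ = 0 from congrFun₂ ha i j, zero_smul]
  have h_zero : (ρ a : K →ₗ[ℂ] K) ∘ₗ V.subtype = 0 := b.toBasis.ext (by simpa using h_basis)
  exact LinearMap.congr_fun h_zero ⟨v, hv⟩

end FiniteDimensional

section StarAlgHom

variable {A B Z : Type u} [NonUnitalRing A] [StarRing A] [Module ℂ A] [IsScalarTower ℂ A A]
  [SMulCommClass ℂ A A] [StarModule ℂ A] [NonUnitalRing B] [StarRing B] [Module ℂ B]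
  [IsScalarTower ℂ B B] [SMulCommClass ℂ B B] [StarModule ℂ B] [NonUnitalRing Z] [StarRing Z]
  [Module ℂ Z]

/-- A linear map on `A ⊗ B` that is multiplicative and `*`-preserving on elementary tensors,
bundled as a `*`-homomorphism. -/
def starAlgHomOfTmul (φ : A ⊗[ℂ] B →ₗ[ℂ] Z)
    (h_mul : ∀ (a c : A) (b d : B), φ (a ⊗ₜ b) * φ (c ⊗ₜ d) = φ ((a * c) ⊗ₜ (b * d)))
    (h_star : ∀ (a : A) (b : B), star (φ (a ⊗ₜ b)) = φ (star a ⊗ₜ star b)) :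
    A ⊗[ℂ] B →⋆ₙₐ[ℂ] Z where
  toFun := φ
  map_smul' := map_smul φ
  map_zero' := map_zero φ
  map_add' := map_add φ
  map_mul' u v := by
    induction u with
    | zero => simp only [zero_mul, map_zero]
    | add u u' hu hu' => simp only [add_mul, map_add, hu, hu']
    | tmul a b =>
      induction v with
      | zero => simp only [mul_zero, map_zero]
      | add v v' hv hv' => simp only [mul_add, map_add, hv, hv']
      | tmul c d => rw [Algebra.TensorProduct.tmul_mul_tmul, h_mul]
  map_star' u := by
    induction u with
    | zero => simp only [star_zero, map_zero]
    | add u v hu hv => simp only [star_add, map_add, hu, hv]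
    | tmul a b => rw [TensorProduct.star_tmul, h_star]

end StarAlgHom

section MatrixModel

variable {A B : Type u} {n : Type*}

section Algebraic

variable [AddCommGroup A] [Module ℂ A] [AddCommGroup B] [Module ℂ B]

/-- The matrix over `B` of the slices of `u : A ⊗ B` along the entries of `π : A → M_n(ℂ)`, that is
the image of `u` under `π ⊗ id : A ⊗ B → M_n(ℂ) ⊗ B = M_n(B)`. -/
def matrixSlice (B : Type u) [AddCommGroup B] [Module ℂ B] (π : A →ₗ[ℂ] Matrix n n ℂ) :
    A ⊗[ℂ] B →ₗ[ℂ] CStarMatrix n n B where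
  toFun u := .ofMatrix <| .of fun i j ↦ sliceMap B (Matrix.entryLinearMap ℂ ℂ i j ∘ₗ π) u
  map_smul' c u := by ext; simp
  map_add' u v := by ext; simp

lemma matrixSlice_tmul_apply (π : A →ₗ[ℂ] Matrix n n ℂ) (a : A) (b : B) (i j : n) :
    matrixSlice B π (a ⊗ₜ b) i j = π a i j • b :=
  sliceMap_tmul _ a b

lemma sliceMap_comp_eq_sum [Fintype n] [DecidableEq n] (π : A →ₗ[ℂ] Matrix n n ℂ)
    (f : Matrix n n ℂ →ₗ[ℂ] ℂ) (u : A ⊗[ℂ] B) :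
    sliceMap B (f ∘ₗ π) u = ∑ i, ∑ j, f (Matrix.single i j 1) • matrixSlice B π u i j := by
  induction u with
  | zero => simp
  | add u v hu hv => simp only [map_add, hu, hv, CStarMatrix.add_apply, smul_add,
      Finset.sum_add_distrib]
  | tmul a b =>
    rw [sliceMap_tmul, LinearMap.comp_apply]
    nth_rw 1 [Matrix.matrix_eq_sum_single (π a)]
    simp only [map_sum, Finset.sum_smul, matrixSlice_tmul_apply, smul_smul]
    refine Finset.sum_congr rfl fun i _ ↦ Finset.sum_congr rfl fun j _ ↦ ?_
    rw [mul_comm, ← smul_eq_mul, ← map_smul, Matrix.smul_single, smul_eq_mul, mul_one]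

end Algebraic

variable [Fintype n]

lemma matrixSlice_tmul_mul_tmul [NonUnitalRing A] [StarRing A] [Module ℂ A] [NonUnitalRing B]
    [Module ℂ B] [IsScalarTower ℂ B B] [SMulCommClass ℂ B B] (π : A →⋆ₙₐ[ℂ] Matrix n n ℂ)
    (a c : A) (b d : B) :
    matrixSlice B (π : A →ₗ[ℂ] Matrix n n ℂ) (a ⊗ₜ b) *
        matrixSlice B (π : A →ₗ[ℂ] Matrix n n ℂ) (c ⊗ₜ d) =
      matrixSlice B (π : A →ₗ[ℂ] Matrix n n ℂ) ((a * c) ⊗ₜ (b * d)) := by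
  ext i j
  simp [CStarMatrix.mul_apply, matrixSlice_tmul_apply, Matrix.mul_apply, Finset.sum_smul,
    smul_mul_smul_comm]

lemma star_matrixSlice_tmul [NonUnitalRing A] [StarRing A] [Module ℂ A] [NonUnitalRing B]
    [StarRing B] [Module ℂ B] [StarModule ℂ B] (π : A →⋆ₙₐ[ℂ] Matrix n n ℂ) (a : A) (b : B) :
    star (matrixSlice B (π : A →ₗ[ℂ] Matrix n n ℂ) (a ⊗ₜ b)) =
      matrixSlice B (π : A →ₗ[ℂ] Matrix n n ℂ) (star a ⊗ₜ star b) := by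
  ext i j
  simp [CStarMatrix.star_apply, matrixSlice_tmul_apply, map_star, Matrix.star_apply]

lemma hasBoundedSlices_matrixSlice [AddCommGroup A] [Module ℂ A] [NonUnitalCStarAlgebra B]
    [PartialOrder B] [StarOrderedRing B] {π : A →ₗ[ℂ] Matrix n n ℂ} (hπ : Function.Injective π) :
    HasBoundedSlices (matrixSlice B π) where
  bounded_tmul a := by
    let L : B →L[ℂ] CStarMatrix n n B :=
      (CStarMatrix.ofMatrixL : Matrix n n B ≃L[ℂ] CStarMatrix n n B).toContinuousLinearMap ∘L
        ContinuousLinearMap.pi fun i ↦ ContinuousLinearMap.pi fun j ↦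
          π a i j • ContinuousLinearMap.id ℂ B
    have hL (b : B) : matrixSlice B π (a ⊗ₜ b) = L b := by
      ext i j
      exact matrixSlice_tmul_apply π a b i j
    exact ⟨‖L‖, fun b ↦ (hL b).symm ▸ L.le_opNorm b⟩
  bounded_sliceMap f := by
    classical
    obtain ⟨ψ, hψ⟩ := π.exists_leftInverse_of_injective (LinearMap.ker_eq_bot.2 hπ)
    refine ⟨∑ i, ∑ j, ‖f (ψ (Matrix.single i j 1))‖, fun u ↦ ?_⟩
    have h_sum := sliceMap_comp_eq_sum π (f ∘ₗ ψ) u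
    rw [LinearMap.comp_assoc, hψ, LinearMap.comp_id] at h_sum
    calc ‖sliceMap B f u‖
      _ = ‖∑ i, ∑ j, f (ψ (Matrix.single i j 1)) • matrixSlice B π u i j‖ := congrArg norm h_sum
      _ ≤ ∑ i, ∑ j, ‖f (ψ (Matrix.single i j 1))‖ * ‖matrixSlice B π u‖ :=
        norm_sum_le_of_le _ fun i _ ↦ norm_sum_le_of_le _ fun j _ ↦
          (norm_smul_le _ _).trans <| by
            gcongr
            exact CStarMatrix.norm_entry_le_norm
      _ = _ := by simp only [Finset.sum_mul]

end MatrixModel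

section CStarModel

variable {X Y : Type u} [NonUnitalCStarAlgebra Y]

lemma quasispectrum_star_mul_self_subset [NonUnitalRing X] [StarRing X] [Module ℂ X]
    (e : X ≃⋆ₐ[ℂ] Y) (x : X) :
    quasispectrum ℂ (star x * x) ⊆ {z : ℂ | z.im = 0 ∧ 0 ≤ z.re} := fun z hz ↦ by
  let _ := CStarAlgebra.spectralOrder Y
  have _ := CStarAlgebra.spectralOrderedRing Y
  have h_subset : quasispectrum ℂ (star x * x) ⊆ quasispectrum ℂ (star (e x) * e x) := by
    simpa only [e.symm_apply_apply, map_mul, map_star] using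
      NonUnitalAlgHom.quasispectrum_apply_subset e.symm (e (star x * x))
  obtain ⟨h_re, h_im⟩ := Complex.nonneg_iff.1 <|
    quasispectrum_nonneg_of_nonneg _ (star_mul_self_nonneg (e x)) z (h_subset hz)
  exact ⟨h_im.symm, h_re⟩

lemma nonempty_operatorAlgebraEmbedding [NonUnitalNormedRing X] [NormedSpace ℂ X] (φ : X →ₙₐ[ℂ] Y)
    (h_upper : ∃ K, ∀ x, ‖φ x‖ ≤ K * ‖x‖) (h_lower : ∃ K, ∀ x, ‖x‖ ≤ K * ‖φ x‖) :
    Nonempty (OperatorAlgebraEmbedding X) := by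
  obtain ⟨K, _, _, _, ρ, hρ⟩ := exists_isometric_rep Y
  have h_norm (x : X) : ‖ρ (φ x)‖ = ‖φ x‖ := AddMonoidHomClass.isometry_iff_norm ρ |>.1 hρ _
  obtain ⟨C, hC⟩ := h_upper
  obtain ⟨D, hD⟩ := h_lower
  exact ⟨{
    H := K
    ρ := (ρ : Y →ₙₐ[ℂ] (K →L[ℂ] K)).comp φ
    c := (max D 1)⁻¹
    C := C
    c_pos := by positivity
    lower x := by
      rw [inv_mul_le_iff₀ (by positivity)]
      refine (hD x).trans ?_
      rw [← h_norm x]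
      exact mul_le_mul_of_nonneg_right (le_max_left D 1) (norm_nonneg _)
    upper x := (h_norm x).trans_le (hC x) }⟩

lemma norm_apply_eq_of_bijective {T Z : Type*} [NonUnitalNonAssocSemiring T]
    [DistribMulAction ℂ T] [Star T] [NonUnitalCStarAlgebra Z] {φ : T →⋆ₙₐ[ℂ] Y}
    (hφ : Function.Bijective φ) {ψ : T →⋆ₙₐ[ℂ] Z} (hψ : Function.Injective ψ) (u : T) :
    ‖ψ u‖ = ‖φ u‖ := by
  let e := StarAlgEquiv.ofBijective φ hφ
  calc ‖ψ u‖
    _ = ‖ψ.comp (e.symm : Y →⋆ₙₐ[ℂ] T) (e u)‖ := by simp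
    _ = ‖φ u‖ := NonUnitalStarAlgHom.norm_map (ψ.comp (e.symm : Y →⋆ₙₐ[ℂ] T))
      (hψ.comp e.symm.injective) (e u)

end CStarModel

section Completion

variable {A B X : Type u} [NonUnitalCStarAlgebra A] [NonUnitalCStarAlgebra B]

lemma exists_starAlgHom_hasBoundedSlices (A B : Type u) [NonUnitalCStarAlgebra A]
    [NonUnitalCStarAlgebra B] [FiniteDimensional ℂ A] :
    ∃ (Z : Type u) (_ : NonUnitalCStarAlgebra Z) (θ : A ⊗[ℂ] B →⋆ₙₐ[ℂ] Z),
      HasBoundedSlices (θ : A ⊗[ℂ] B →ₗ[ℂ] Z) := by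
  let _ := CStarAlgebra.spectralOrder B
  have _ := CStarAlgebra.spectralOrderedRing B
  obtain ⟨n, π, hπ⟩ := exists_injective_matrix_rep A
  exact ⟨CStarMatrix (Fin n) (Fin n) B, inferInstance,
    starAlgHomOfTmul (matrixSlice B (π : A →ₗ[ℂ] Matrix (Fin n) (Fin n) ℂ))
      (matrixSlice_tmul_mul_tmul π) (star_matrixSlice_tmul π),
    hasBoundedSlices_matrixSlice hπ⟩

namespace IsTensorCompletion

variable [NonUnitalNormedRing X] [StarRing X] [NormedSpace ℂ X] [CompleteSpace X]
  {ι : A ⊗[ℂ] B →ₗ[ℂ] X}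

/-- The identification of a completion `X` of `A ⊗ B` with `A ⊗_min B` given by a `*`-isomorphism
`e` of `X` with a C⋆-algebra, when `A ⊗ B` already exhausts `X`. -/
def minTensorWitness {ν : A ⊗[ℂ] B → ℝ} {Y : Type u} [NonUnitalCStarAlgebra Y]
    (hX : IsTensorCompletion ν X ι) (hι : Function.Bijective ι) (e : X ≃⋆ₐ[ℂ] Y) :
    MinTensorWitness A B X ι where
  Y := Y
  ιY := (e : X →ₗ[ℂ] Y) ∘ₗ ι
  inj := e.injective.comp hι.injective
  dense := (e.surjective.comp hι.surjective).denseRange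
  mul_tmul a c b d := by simp [← hX.mul_tmul]
  star_tmul a b := by simp [← hX.star_tmul, map_star]
  minimal Z _ ιZ hιZ _ h_mul h_star u :=
    (norm_apply_eq_of_bijective
      (φ := (e : X →⋆ₙₐ[ℂ] Y).comp (starAlgHomOfTmul ι hX.mul_tmul hX.star_tmul))
      (ψ := starAlgHomOfTmul ιZ h_mul h_star) (e.bijective.comp hι) hιZ u).ge
  iso := e
  iso_comm _ := rfl

variable {NA : ∀ p : ℕ, Matrix (Fin p) (Fin p) A → ℝ}
  {NB : ∀ q : ℕ, Matrix (Fin q) (Fin q) B → ℝ}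

lemma hasBoundedSlices [FiniteDimensional ℂ A] (hNA : ∀ p, IsCStarNorm (NA p))
    (hNB : ∀ q, IsCStarNorm (NB q)) (hX : IsTensorCompletion (osProjNorm NA NB) X ι) :
    HasBoundedSlices ι where
  bounded_tmul a := ⟨‖a‖, fun b ↦ hX.norm_eq (a ⊗ₜ b) ▸ osProjNorm_tmul_le hNA hNB a b⟩
  bounded_sliceMap f := ⟨‖f.toContinuousLinearMap‖, fun u ↦
    hX.norm_eq u ▸ norm_sliceMap_le hNA hNB f.toContinuousLinearMap u⟩

lemma bijective_of_hasBoundedSlices {ν : A ⊗[ℂ] B → ℝ} [FiniteDimensional ℂ A]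
    (hX : IsTensorCompletion ν X ι) (hι : HasBoundedSlices ι) : Function.Bijective ι := by
  refine ⟨hι.injective, Set.range_eq_univ.1 ?_⟩
  rw [← hι.isClosed_range.closure_eq, hX.dense.closure_range]

lemma exists_starAlgEquiv_of_hasBoundedSlices {ν : A ⊗[ℂ] B → ℝ} [FiniteDimensional ℂ A]
    (hX : IsTensorCompletion ν X ι) (hι : HasBoundedSlices ι) :
    ∃ (Y : Type u) (_ : NonUnitalCStarAlgebra Y) (e : X ≃⋆ₐ[ℂ] Y),
      (∃ K, ∀ x, ‖e x‖ ≤ K * ‖x‖) ∧ ∃ K, ∀ x, ‖x‖ ≤ K * ‖e x‖ := by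
  obtain ⟨Z, _, θ, hθ⟩ := exists_starAlgHom_hasBoundedSlices A B
  have h_bij := hX.bijective_of_hasBoundedSlices hι
  have h_closed : IsClosed (NonUnitalStarAlgHom.range θ : Set Z) := hθ.isClosed_range
  let eX := StarAlgEquiv.ofBijective (starAlgHomOfTmul ι hX.mul_tmul hX.star_tmul) h_bij
  let e := eX.symm.trans (StarAlgEquiv.ofInjective' θ hθ.injective)
  have h_norm (u : A ⊗[ℂ] B) : ‖e (ι u)‖ = ‖θ u‖ :=
    congrArg (‖θ ·‖) (eX.symm_apply_apply u)
  refine ⟨NonUnitalStarAlgHom.range θ, inferInstance, e, ?_, ?_⟩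
  · exact (hθ.exists_norm_le hι).imp fun K hK ↦ h_bij.surjective.forall.2 fun u ↦
      (h_norm u).trans_le (hK u)
  · exact (hι.exists_norm_le hθ).imp fun K hK ↦ h_bij.surjective.forall.2 fun u ↦
      (hK u).trans_eq (congrArg (K * ·) (h_norm u).symm)

lemma bijective (hNA : ∀ p, IsCStarNorm (NA p)) (hNB : ∀ q, IsCStarNorm (NB q))
    (hX : IsTensorCompletion (osProjNorm NA NB) X ι)
    (hfd : FiniteDimensional ℂ A ∨ FiniteDimensional ℂ B) : Function.Bijective ι := by
  obtain _ | _ := hfd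
  · exact hX.bijective_of_hasBoundedSlices (hX.hasBoundedSlices hNA hNB)
  · have hX' := hX.comm hNA hNB
    exact (Function.Bijective.of_comp_iff ι (TensorProduct.comm ℂ B A).bijective).1
      (hX'.bijective_of_hasBoundedSlices (hX'.hasBoundedSlices hNB hNA))

lemma exists_starAlgEquiv (hNA : ∀ p, IsCStarNorm (NA p)) (hNB : ∀ q, IsCStarNorm (NB q))
    (hX : IsTensorCompletion (osProjNorm NA NB) X ι)
    (hfd : FiniteDimensional ℂ A ∨ FiniteDimensional ℂ B) :
    ∃ (Y : Type u) (_ : NonUnitalCStarAlgebra Y) (e : X ≃⋆ₐ[ℂ] Y),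
      (∃ K, ∀ x, ‖e x‖ ≤ K * ‖x‖) ∧ ∃ K, ∀ x, ‖x‖ ≤ K * ‖e x‖ := by
  obtain _ | _ := hfd
  · exact hX.exists_starAlgEquiv_of_hasBoundedSlices (hX.hasBoundedSlices hNA hNB)
  · have hX' := hX.comm hNA hNB
    exact hX'.exists_starAlgEquiv_of_hasBoundedSlices (hX'.hasBoundedSlices hNB hNA)

end IsTensorCompletion

end Completion

/-- If `A` and `B` are C⋆-algebras and at least one of them is
finite-dimensional, then `A ⊗̂ B` is a symmetric operator algebra; in particular it is
`*`-isomorphic to the minimal C⋆-tensor product `A ⊗_min B`. -/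
theorem osProjTensor_symmetric_operatorAlgebra_of_finiteDimensional {A B X : Type u} [NonUnitalCStarAlgebra A] [NonUnitalCStarAlgebra B]
    [NonUnitalNormedRing X] [StarRing X] [NormedSpace ℂ X] [CompleteSpace X]
    [IsScalarTower ℂ X X] [SMulCommClass ℂ X X]
    (NA : ∀ p : ℕ, Matrix (Fin p) (Fin p) A → ℝ)
    (NB : ∀ q : ℕ, Matrix (Fin q) (Fin q) B → ℝ)
    (hNA : ∀ p, IsCStarNorm (NA p)) (hNB : ∀ q, IsCStarNorm (NB q))
    (ι : A ⊗[ℂ] B →ₗ[ℂ] X) (hX : IsTensorCompletion (osProjNorm NA NB) X ι)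
    (hfd : FiniteDimensional ℂ A ∨ FiniteDimensional ℂ B) :
    (∀ x : X, quasispectrum ℂ (star x * x) ⊆ {z : ℂ | z.im = 0 ∧ 0 ≤ z.re}) ∧
    Nonempty (OperatorAlgebraEmbedding X) ∧
    Nonempty (MinTensorWitness A B X ι) := by
  obtain ⟨Y, _, e, h_upper, h_lower⟩ := hX.exists_starAlgEquiv hNA hNB hfd
  exact ⟨quasispectrum_star_mul_self_subset e,
    nonempty_operatorAlgebraEmbedding (e : X →ₙₐ[ℂ] Y) h_upper h_lower,
    ⟨hX.minTensorWitness (hX.bijective hNA hNB hfd) e⟩⟩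

end
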